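/- In a cone with joins, the cancellation property holds in the form: a + v ≤ b + v implies a + εv ≤ b + εv, where εv := inf{λ·v : λ > 0}. -/

import Mathlib

open scoped NNReal

/-- The part at infinity of an element of a cone: `ε v = inf {λ•v : λ > 0}`. -/
noncomputable def epsPart {J : Type*} [CompleteLattice J] [AddCommMonoid J] [Module ℝ≥0 J]
    (v : J) : J :=
  sInf {w | ∃ l : ℝ≥0, 0 < l ∧ w = l • v}

/-- Cancellation property (second version) in a cone with joins:
`a + v ≤ b + v` implies `a + εv ≤ b + εv`. -/
theorem stmt7 {J : Type*} [CompleteLattice J] [AddCommMonoid J] [Module ℝ≥0 J]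
    (hle : ∀ x y : J, x ≤ y ↔ ∃ z, x + z = y)
    (hscale : ∀ v : J, IsLUB {w | ∃ η : ℝ≥0, η < 1 ∧ w = η • v} v)
    (hinf : ∀ (v : J) (A : Set J), sInf ((fun a => v + a) '' A) = v + sInf A)
    (a b v : J) (h : a + v ≤ b + v) :
    a + epsPart v ≤ b + epsPart v := by
  have hadd : ∀ x y z : J, x ≤ y → z + x ≤ z + y := by
    intro x y z hxy
    obtain ⟨w, rfl⟩ := (hle _ _).1 hxy
    exact (hle _ _).2 ⟨w, add_assoc _ _ _⟩
  have hsm : ∀ (c : ℝ≥0) (x y : J), x ≤ y → c • x ≤ c • y := by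
    intro c x y hxy
    obtain ⟨w, rfl⟩ := (hle _ _).1 hxy
    exact (hle _ _).2 ⟨c • w, (smul_add _ _ _).symm⟩
  have hn : ∀ n : ℕ, (n : ℝ≥0) • a + v ≤ (n : ℝ≥0) • b + v := by
    intro n
    induction n with
    | zero => simp
    | succ k ih =>
      calc ((k + 1 : ℕ) : ℝ≥0) • a + v = a + ((k : ℝ≥0) • a + v) := by
            push_cast; rw [add_smul, one_smul]; abel
        _ ≤ a + ((k : ℝ≥0) • b + v) := hadd _ _ _ ih
        _ = (k : ℝ≥0) • b + (a + v) := by abel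
        _ ≤ (k : ℝ≥0) • b + (b + v) := hadd _ _ _ h
        _ = ((k + 1 : ℕ) : ℝ≥0) • b + v := by
            push_cast; rw [add_smul, one_smul]; abel
  have key : a + epsPart v ≤ sInf ((fun x => b + x) '' {w | ∃ l : ℝ≥0, 0 < l ∧ w = l • v}) := by
    apply le_sInf
    rintro _ ⟨_, ⟨l, hl, rfl⟩, rfl⟩
    obtain ⟨n, hnl⟩ := exists_nat_one_div_lt hl
    have hpos : (0 : ℝ≥0) < (n : ℝ≥0) + 1 := by positivity
    have h1 := hsm (1 / ((n : ℝ≥0) + 1)) _ _ (hn (n + 1))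
    push_cast at h1
    rw [smul_add, smul_add, smul_smul, smul_smul, one_div_mul_cancel hpos.ne', one_smul,
      one_smul] at h1
    have h2 : epsPart v ≤ (1 / ((n : ℝ≥0) + 1)) • v :=
      sInf_le ⟨_, by positivity, rfl⟩
    have h3 : (1 / ((n : ℝ≥0) + 1)) • v ≤ l • v := by
      refine (hle _ _).2 ⟨(l - 1 / ((n : ℝ≥0) + 1)) • v, ?_⟩
      rw [← add_smul, add_tsub_cancel_of_le hnl.le]
    exact (hadd _ _ _ h2).trans (h1.trans (hadd _ _ _ h3))
  rw [hinf] at key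
  exact key
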